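/- Let n ≥ 1 and let A₁, A₂ be n×n integer matrices with det(A₁−A₂) ≠ 0. Then MC(f_{A₁}, f_{A₂}) = |det(A₁−A₂)|: there exist continuous maps f₁' homotopic to f_{A₁} and f₂' homotopic to f_{A₂} whose coincidence set {x ∈ Tⁿ : f₁'(x) = f₂'(x)} has exactly |det(A₁−A₂)| elements, and no pair of maps homotopic to f_{A₁}, f_{A₂} respectively has a coincidence set of smaller cardinality. -/

import Mathlib

/-- The `k`-torus `(ℝ/ℤ)ᵏ`. -/
abbrev Torus (k : ℕ) : Type := Fin k → AddCircle (1 : ℝ)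

/-- The continuous homomorphism `Tᵐ → Tⁿ` induced by an `n × m` integer matrix. -/
noncomputable def torusHom {m n : ℕ} (A : Matrix (Fin n) (Fin m) ℤ) :
    C(Torus m, Torus n) :=
  ⟨fun x j => ∑ i, A j i • x i, by
    refine continuous_pi fun j => ?_
    exact continuous_finset_sum _ fun i _ => (continuous_apply i).zsmul (A j i)⟩

/-!
A pair of maps homotopic to `f_{A₁}`, `f_{A₂}` differs by `z ↦ A z + φ z`, where `A = A₁ - A₂` and
`φ : Tⁿ → ℝⁿ` is continuous, and the coincidences are the zeros of this map. Lifting to `ℝⁿ`, each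
zero picks out an element of the cokernel of `A` on `ℤⁿ`, its Nielsen class, and this cokernel has
`|det A|` elements. For `φ = 0` each class contains at most one zero, which bounds `MC` above.

For arbitrary `φ` each class contains a zero because `F : x ↦ x + A⁻¹ φ(x)`, which commutes with
integer translations, is surjective. This is a degree argument: with `f = F - id` smooth and
periodic, `∫ det (1 + t f')` over a fundamental domain is a polynomial in `t`, and for small
`t > 0` it equals the volume of the domain since `id + t f` is then a diffeomorphism; hence it
equals the volume for all `t`, in particular for `F` itself. If `F` missed the lattice, a
perturbation of `F` would have singular derivative everywhere, contradicting this.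
-/

open MeasureTheory Set Module Submodule
open scoped AddConstMap Matrix

section PolynomialFamilies

open Polynomial

theorem eval_det_X_smul_add_one {R ι : Type*} [CommRing R] [Fintype ι] [DecidableEq ι]
    (A : Matrix ι ι R) (t : R) :
    ((X : R[X]) • A.map C + (1 : Matrix ι ι R).map C).det.eval t = (1 + t • A).det := by
  rw [← coe_evalRingHom, RingHom.map_det, add_comm]
  congr 1
  ext i j
  simpa [Matrix.one_apply, apply_ite] using mul_comm (A i j) t

theorem exists_polynomial_eval_eq_det_one_add_smul {R M : Type*} [CommRing R]
    [StrongRankCondition R] [AddCommGroup M] [Module R M] [Module.Free R M] [Module.Finite R M]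
    (f : M →ₗ[R] M) :
    ∃ p : R[X], p.natDegree ≤ finrank R M ∧ ∀ t, p.eval t = LinearMap.det (1 + t • f) := by
  classical
  let b := Module.Free.chooseBasis R M
  refine ⟨((X : R[X]) • (LinearMap.toMatrix b b f).map C + (1 : Matrix _ _ R).map C).det, ?_,
    fun t => ?_⟩
  · rw [finrank_eq_card_basis b]
    exact natDegree_det_X_add_C_le _ _
  · rw [eval_det_X_smul_add_one, ← LinearMap.det_toMatrix b, map_add, map_smul,
      LinearMap.toMatrix_one]

theorem integral_eval_eq_of_infinite {α : Type*} [MeasurableSpace α] {μ : Measure α}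
    {p : α → ℝ[X]} {d : ℕ} (hp : ∀ x, (p x).natDegree ≤ d)
    (hint : ∀ t, Integrable (fun x => (p x).eval t) μ)
    {S : Set ℝ} (hS : S.Infinite) {c : ℝ} (hc : ∀ t ∈ S, ∫ x, (p x).eval t ∂μ = c) (t : ℝ) :
    ∫ x, (p x).eval t ∂μ = c := by
  obtain ⟨s, hsS, hcard⟩ := hS.exists_subset_card_eq (d + 1)
  have hinj : InjOn id (s : Set ℝ) := injOn_id _
  have hinterp (x : α) :
      (p x).eval t = ∑ u ∈ s, (p x).eval u * (Lagrange.basis s id u).eval t := by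
    have hdeg : (p x).degree < s.card :=
      degree_le_natDegree.trans_lt (by exact_mod_cast (hp x).trans_lt (by lia))
    conv_lhs => rw [Lagrange.eq_interpolate hinj hdeg]
    simp [Lagrange.interpolate_apply, eval_finsetSum]
  have hsum : ∑ u ∈ s, (Lagrange.basis s id u).eval t = 1 := by
    have hne : s.Nonempty := Finset.card_pos.1 (by lia)
    rw [← eval_finsetSum, Lagrange.sum_basis hinj hne, eval_one]
  calc ∫ x, (p x).eval t ∂μ
      = ∑ u ∈ s, ∫ x, (p x).eval u * (Lagrange.basis s id u).eval t ∂μ := by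
        simp_rw [hinterp]
        exact integral_finsetSum s fun u _ => (hint u).mul_const _
    _ = ∑ u ∈ s, c * (Lagrange.basis s id u).eval t :=
        Finset.sum_congr rfl fun u hu => by rw [integral_mul_const, hc u (hsS hu)]
    _ = c := by rw [← Finset.mul_sum, hsum, mul_one]

end PolynomialFamilies

theorem bijective_id_add_of_lipschitzWith {E : Type*} [NormedAddCommGroup E] [NormedSpace ℝ E]
    [CompleteSpace E] {G : E → E} {c : NNReal} (hG : LipschitzWith c G) (hc : c < 1) :
    Function.Bijective fun x => x + G x := by
  have happ : ApproximatesLinearOn (fun x => x + G x)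
      (ContinuousLinearEquiv.refl ℝ E : E →L[ℝ] E) univ c := by
    rw [ApproximatesLinearOn.approximatesLinearOn_iff_lipschitzOnWith, lipschitzOnWith_univ]
    convert hG
    ext x
    simp
  have hlt : Subsingleton E ∨
      c < ‖((ContinuousLinearEquiv.refl ℝ E).symm : E →L[ℝ] E)‖₊⁻¹ := by
    rcases subsingleton_or_nontrivial E with h | h
    · exact .inl h
    · refine .inr (hc.trans_eq ?_)
      rw [ContinuousLinearEquiv.refl_symm, ContinuousLinearEquiv.coe_refl,
        ContinuousLinearMap.nnnorm_id, inv_one]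
  exact (happ.toHomeomorph _ hlt).bijective

theorem periodic_fderiv {E F : Type*} [NormedAddCommGroup E] [NormedSpace ℝ E]
    [NormedAddCommGroup F] [NormedSpace ℝ F] {f : E → F} {v : E} (hf : Function.Periodic f v) :
    Function.Periodic (fderiv ℝ f) v := by
  intro x
  rw [← fderiv_comp_add_right, hf.funext]

theorem fderiv_id_add_smul {E : Type*} [NormedAddCommGroup E] [NormedSpace ℝ E] {f : E → E}
    (hf : Differentiable ℝ f) (t : ℝ) (x : E) :
    fderiv ℝ (fun x => x + t • f x) x = 1 + t • fderiv ℝ f x :=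
  ((hasFDerivAt_id x).add ((hf x).hasFDerivAt.const_smul t)).fderiv

section Lattice

variable {ι E : Type*} [Finite ι] [NormedAddCommGroup E] [NormedSpace ℝ E] (b : Basis ι ℝ E)

theorem isCompact_closure_fundamentalDomain : IsCompact (closure (ZSpan.fundamentalDomain b)) := by
  have := b.finiteDimensional_of_finite
  have := FiniteDimensional.proper ℝ E
  exact (ZSpan.fundamentalDomain_isBounded b).isCompact_closure

theorem exists_mem_fundamentalDomain_add (x : E) :
    ∃ v ∈ span ℤ (range b), x + v ∈ ZSpan.fundamentalDomain b := by
  have := Fintype.ofFinite ι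
  refine ⟨-ZSpan.floor b x, neg_mem (ZSpan.floor b x).2, ?_⟩
  simpa [ZSpan.fract, ← sub_eq_add_neg] using ZSpan.fract_mem_fundamentalDomain b x

variable {b}

theorem exists_norm_le_of_periodic {F : Type*} [NormedAddCommGroup F] {f : E → F}
    (hf : ∀ v ∈ span ℤ (range b), Function.Periodic f v) (hc : Continuous f) :
    ∃ C > 0, ∀ x, ‖f x‖ ≤ C := by
  obtain ⟨C, hC⟩ := (isCompact_closure_fundamentalDomain b).exists_bound_of_continuousOn
    hc.continuousOn
  refine ⟨max C 1, by positivity, fun x => ?_⟩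
  obtain ⟨v, hv, hxv⟩ := exists_mem_fundamentalDomain_add b x
  rw [← hf v hv x]
  exact (hC _ (subset_closure hxv)).trans (le_max_left _ _)

theorem uniformContinuous_of_periodic {F : Type*} [UniformSpace F] {f : E → F}
    (hf : ∀ v ∈ span ℤ (range b), Function.Periodic f v) (hc : Continuous f) :
    UniformContinuous f := by
  intro r hr
  obtain ⟨δ, hδ, h⟩ := Metric.mem_uniformity_dist.1 <|
    (isCompact_closure_fundamentalDomain b).uniformContinuousAt_of_continuousAt f
      (fun _ _ => hc.continuousAt) hr
  refine Metric.mem_uniformity_dist.2 ⟨δ, hδ, fun {x y} hxy => ?_⟩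
  obtain ⟨v, hv, hxv⟩ := exists_mem_fundamentalDomain_add b x
  have hxy' := h (a := x + v) (b := y + v) (by rwa [dist_add_right]) (subset_closure hxv)
  simpa [hf v hv x, hf v hv y] using hxy'

theorem exists_contDiff_periodic_approx {F : Type*} [NormedAddCommGroup F] [NormedSpace ℝ F]
    [CompleteSpace F] {f : E → F} (hf : ∀ v ∈ span ℤ (range b), Function.Periodic f v)
    (hc : Continuous f) {ε : ℝ} (hε : 0 < ε) :
    ∃ g : E → F, ContDiff ℝ 1 g ∧ (∀ v ∈ span ℤ (range b), Function.Periodic g v) ∧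
      ∀ x, dist (g x) (f x) ≤ ε := by
  have := b.finiteDimensional_of_finite
  borelize E
  let μ : Measure E := Measure.addHaar
  obtain ⟨δ, hδ, hfδ⟩ := Metric.uniformContinuous_iff.1 (uniformContinuous_of_periodic hf hc) ε hε
  let φ : ContDiffBump (0 : E) := ⟨δ / 2, δ, by positivity, by linarith⟩
  refine ⟨convolution (φ.normed μ) f (ContinuousLinearMap.lsmul ℝ ℝ) μ, ?_, fun v hv x => ?_,
    fun x => ?_⟩
  · exact φ.hasCompactSupport_normed.contDiff_convolution_left (n := 1) _ φ.contDiff_normed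
      hc.locallyIntegrable
  · simp only [convolution_def, add_sub_right_comm, hf v hv _]
  · exact φ.dist_normed_convolution_le hc.aestronglyMeasurable fun y hy => (hfδ hy).le

end Lattice

/-- `F : E → E` commutes with the translations by the lattice `L`: it is a lift of a self-map of the
torus `E ⧸ L` that is homotopic to the identity, hence of degree one. -/
def IsDegOneLift {E : Type*} [AddCommGroup E] (L : Submodule ℤ E) (F : E → E) : Prop :=
  ∀ v ∈ L, ∀ x, F (x + v) = F x + v

section DegOneLift

theorem IsDegOneLift.periodic_sub_id {E : Type*} [AddCommGroup E] {L : Submodule ℤ E} {F : E → E}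
    (hF : IsDegOneLift L F) {v : E} (hv : v ∈ L) : Function.Periodic (fun x => F x - x) v := by
  intro x
  simp only [hF v hv, add_sub_add_right_eq_sub]

theorem IsDegOneLift.id_add_of_periodic {E : Type*} [AddCommGroup E] {L : Submodule ℤ E} {f : E → E}
    (hf : ∀ v ∈ L, Function.Periodic f v) : IsDegOneLift L fun x => x + f x := by
  intro v hv x
  simp only [hf v hv x]
  abel

variable {ι E : Type*} [Finite ι] [NormedAddCommGroup E] [NormedSpace ℝ E]
  [MeasurableSpace E] [BorelSpace E] {b : Basis ι ℝ E} (μ : Measure E) [μ.IsAddHaarMeasure]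
  {F : E → E}

theorem IsDegOneLift.measure_image_fundamentalDomain (hF : IsDegOneLift (span ℤ (range b)) F)
    (hc : Continuous F) (hbij : Function.Bijective F) :
    μ (F '' ZSpan.fundamentalDomain b) = μ (ZSpan.fundamentalDomain b) := by
  have := b.finiteDimensional_of_finite
  have := FiniteDimensional.proper ℝ E
  set D := ZSpan.fundamentalDomain b
  have himage : IsAddFundamentalDomain (span ℤ (range b)).toAddSubgroup (F '' D) μ := by
    refine .mk' ((ZSpan.fundamentalDomain_measurableSet b).image_of_continuousOn_injOn
      hc.continuousOn hbij.1.injOn).nullMeasurableSet fun y => ?_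
    obtain ⟨x, rfl⟩ := hbij.2 y
    have hiff (v : (span ℤ (range b)).toAddSubgroup) : v +ᵥ F x ∈ F '' D ↔ v +ᵥ x ∈ D := by
      change (v : E) + F x ∈ F '' D ↔ (v : E) + x ∈ D
      rw [add_comm, ← hF v v.2, hbij.1.mem_set_image, add_comm]
    simp_rw [hiff]
    exact ZSpan.exist_unique_vadd_mem_fundamentalDomain b x
  have : Countable (span ℤ (range b)).toAddSubgroup :=
    inferInstanceAs (Countable (span ℤ (range b)))
  exact himage.measure_eq (ZSpan.isAddFundamentalDomain' b μ)

theorem IsDegOneLift.integral_det_fderiv_of_bijective (hF : IsDegOneLift (span ℤ (range b)) F)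
    (hd : Differentiable ℝ F) (hbij : Function.Bijective F) (hpos : ∀ x, 0 ≤ (fderiv ℝ F x).det) :
    ∫ x in ZSpan.fundamentalDomain b, (fderiv ℝ F x).det ∂μ =
      μ.real (ZSpan.fundamentalDomain b) := by
  have := b.finiteDimensional_of_finite
  have hchange := integral_image_eq_integral_abs_det_fderiv_smul μ
    (ZSpan.fundamentalDomain_measurableSet b) (fun x _ => (hd x).hasFDerivAt.hasFDerivWithinAt)
    hbij.1.injOn (fun _ => (1 : ℝ))
  simpa [abs_of_nonneg (hpos _), measureReal_def,
    hF.measure_image_fundamentalDomain μ hd.continuous hbij] using hchange.symm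

theorem exists_integral_det_one_add_smul_fderiv_eq {f : E → E}
    (hf : ∀ v ∈ span ℤ (range b), Function.Periodic f v) (hs : ContDiff ℝ 1 f) :
    ∃ r > (0 : ℝ), ∀ t ∈ Ioo 0 r,
      ∫ x in ZSpan.fundamentalDomain b, (1 + t • fderiv ℝ f x).det ∂μ =
        μ.real (ZSpan.fundamentalDomain b) := by
  have := b.finiteDimensional_of_finite
  have := FiniteDimensional.complete ℝ E
  have hd : Differentiable ℝ f := hs.differentiable one_ne_zero
  obtain ⟨C, hC0, hC⟩ := exists_norm_le_of_periodic (fun v hv => periodic_fderiv (hf v hv))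
    (hs.continuous_fderiv one_ne_zero)
  obtain ⟨ρ, hρ, hdet⟩ := Metric.isOpen_iff.1
    (isOpen_lt continuous_const ContinuousLinearMap.continuous_det :
      IsOpen {L : E →L[ℝ] E | 0 < L.det}) 1 (by simp [ContinuousLinearMap.det])
  refine ⟨min ρ 1 / C, by positivity, fun t ⟨ht0, htr⟩ => ?_⟩
  have htC : t * C < min ρ 1 := (lt_div_iff₀ hC0).1 htr
  have hbound (x : E) : ‖t • fderiv ℝ f x‖ ≤ t * C := by
    rw [norm_smul, Real.norm_of_nonneg ht0.le]
    exact mul_le_mul_of_nonneg_left (hC x) ht0.le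
  have hlip : LipschitzWith ⟨t * C, by positivity⟩ fun x => t • f x :=
    lipschitzWith_of_nnnorm_fderiv_le (𝕜 := ℝ) (hd.const_smul t) fun x => by
      rw [fderiv_fun_const_smul (hd x)]
      exact hbound x
  have hbij := bijective_id_add_of_lipschitzWith hlip (htC.trans_le (min_le_right _ _))
  have hpos (x : E) : 0 ≤ (1 + t • fderiv ℝ f x).det :=
    (hdet (by simpa using (hbound x).trans_lt (htC.trans_le (min_le_left _ _)))).le
  have hlift : IsDegOneLift (span ℤ (range b)) fun x => x + t • f x :=
    .id_add_of_periodic fun v hv x => by simp only [hf v hv x]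
  simp_rw [← fderiv_id_add_smul hd] at hpos ⊢
  exact hlift.integral_det_fderiv_of_bijective μ (differentiable_id.add (hd.const_smul t)) hbij
    hpos

theorem integral_det_one_add_smul_fderiv {f : E → E}
    (hf : ∀ v ∈ span ℤ (range b), Function.Periodic f v) (hs : ContDiff ℝ 1 f) (t : ℝ) :
    ∫ x in ZSpan.fundamentalDomain b, (1 + t • fderiv ℝ f x).det ∂μ =
      μ.real (ZSpan.fundamentalDomain b) := by
  have := b.finiteDimensional_of_finite
  obtain ⟨r, hr, hsmall⟩ := exists_integral_det_one_add_smul_fderiv_eq μ hf hs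
  choose p hdeg heval using fun x =>
    exists_polynomial_eval_eq_det_one_add_smul (fderiv ℝ f x : E →ₗ[ℝ] E)
  have hdet (t : ℝ) (x : E) : (1 + t • fderiv ℝ f x).det = (p x).eval t := (heval x t).symm
  have hint (t : ℝ) : IntegrableOn (fun x => (p x).eval t) (ZSpan.fundamentalDomain b) μ := by
    simp_rw [← hdet]
    have hcont : Continuous fun x => (1 + t • fderiv ℝ f x).det :=
      ContinuousLinearMap.continuous_det.comp
        (continuous_const.add ((hs.continuous_fderiv one_ne_zero).const_smul t))
    exact (hcont.continuousOn.integrableOn_compact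
      (isCompact_closure_fundamentalDomain b)).mono_set subset_closure
  simp_rw [hdet] at hsmall ⊢
  exact integral_eval_eq_of_infinite hdeg hint (Ioo_infinite hr) hsmall t

theorem IsDegOneLift.integral_det_fderiv (hF : IsDegOneLift (span ℤ (range b)) F)
    (hs : ContDiff ℝ 1 F) :
    ∫ x in ZSpan.fundamentalDomain b, (fderiv ℝ F x).det ∂μ =
      μ.real (ZSpan.fundamentalDomain b) := by
  have hs' : ContDiff ℝ 1 fun x => F x - x := hs.sub contDiff_id
  have hF' (x : E) : fderiv ℝ F x = 1 + (1 : ℝ) • fderiv ℝ (fun x => F x - x) x := by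
    rw [← fderiv_id_add_smul (hs'.differentiable one_ne_zero)]
    simp
  simp_rw [hF']
  exact integral_det_one_add_smul_fderiv μ (fun v hv => hF.periodic_sub_id hv) hs' 1

end DegOneLift

open intervalIntegral in
theorem exists_contDiff_addConstMap_hasDerivAt_zero {δ : ℝ} (hδ : 0 < δ) :
    ∃ η : ℝ →+c[1, 1] ℝ, ContDiff ℝ 1 η ∧
      ∀ x : ℝ, δ ≤ ‖(x : UnitAddCircle)‖ → HasDerivAt η 0 x := by
  let p : ℝ → ℝ := fun u => max 0 (δ - ‖(u : UnitAddCircle)‖)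
  have hpc : Continuous p :=
    continuous_const.max (continuous_const.sub (AddCircle.continuous_mk' 1).norm)
  have hper : Function.Periodic p 1 := fun u => by simp only [p, AddCircle.coe_add_period]
  have hpi (u v : ℝ) : IntervalIntegrable p volume u v := hpc.intervalIntegrable u v
  have hmass : 0 < ∫ u in (0 : ℝ)..1, p u :=
    integral_pos one_pos hpc.continuousOn (fun _ _ => le_max_left _ _) ⟨0, by simp, by simp [p, hδ]⟩
  set c := ∫ u in (0 : ℝ)..1, p u
  have hder (x : ℝ) : HasDerivAt (fun x => c⁻¹ * ∫ u in (0 : ℝ)..x, p u) (c⁻¹ * p x) x :=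
    (integral_hasDerivAt_right (hpi _ _)
      hpc.stronglyMeasurable.stronglyMeasurableAtFilter hpc.continuousAt).const_mul _
  have hadd (x : ℝ) : ∫ u in (0 : ℝ)..(x + 1), p u = (∫ u in (0 : ℝ)..x, p u) + c := by
    rw [← integral_add_adjacent_intervals (hpi 0 x) (hpi x (x + 1)),
      hper.intervalIntegral_add_eq x 0, zero_add]
  refine ⟨⟨fun x => c⁻¹ * ∫ u in (0 : ℝ)..x, p u, fun x => ?_⟩, ?_, fun x hx => ?_⟩
  · rw [hadd, mul_add, inv_mul_cancel₀ hmass.ne']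
  · refine contDiff_one_iff_deriv.2 ⟨fun x => (hder x).differentiableAt, ?_⟩
    exact (continuous_const.mul hpc).congr fun x => (hder x).deriv.symm
  · have hpx : p x = 0 := max_eq_left (sub_nonpos.2 hx)
    exact (hder x).congr_deriv (by rw [hpx, mul_zero])

section TorusProj

variable {ι : Type*}

/-- The covering homomorphism `ℝ^ι → (ℝ/ℤ)^ι`. -/
def torusProj : (ι → ℝ) →+ (ι → UnitAddCircle) :=
  (QuotientAddGroup.mk' (AddSubgroup.zmultiples (1 : ℝ))).compLeft ι

/-- The inclusion of the deck group `ℤ^ι` of `torusProj` into `ℝ^ι`. -/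
def intVec : (ι → ℤ) →+ (ι → ℝ) :=
  (Int.castAddHom ℝ).compLeft ι

theorem intVec_injective : Function.Injective (intVec (ι := ι)) :=
  Int.cast_injective.comp_left

theorem continuous_torusProj : Continuous (torusProj (ι := ι)) :=
  continuous_pi fun i => (AddCircle.continuous_mk' 1).comp (continuous_apply i)

theorem torusProj_surjective : Function.Surjective (torusProj (ι := ι)) :=
  (QuotientAddGroup.mk'_surjective _).comp_left

theorem torusProj_eq_zero_iff {x : ι → ℝ} : torusProj x = 0 ↔ ∃ k, intVec k = x := by
  have hcoord (i : ι) : torusProj x i = 0 ↔ ∃ k : ℤ, (k : ℝ) = x i := by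
    refine (AddCircle.coe_eq_zero_iff (1 : ℝ)).trans ?_
    simp only [zsmul_one]
  simp only [funext_iff, Pi.zero_apply, hcoord, Classical.skolem, intVec,
    AddMonoidHom.compLeft_apply, Function.comp_apply, Int.coe_castAddHom]

theorem torusProj_eq_iff {x y : ι → ℝ} : torusProj x = torusProj y ↔ ∃ k, x = y + intVec k := by
  rw [← sub_eq_zero, ← map_sub, torusProj_eq_zero_iff]
  simp only [eq_sub_iff_add_eq', eq_comm (b := x)]

theorem torusProj_add_intVec (x : ι → ℝ) (k : ι → ℤ) :
    torusProj (x + intVec k) = torusProj x :=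
  torusProj_eq_iff.2 ⟨k, rfl⟩

theorem norm_torusProj_le [Fintype ι] (x : ι → ℝ) : ‖torusProj x‖ ≤ ‖x‖ :=
  pi_norm_le_iff_of_nonneg (norm_nonneg x) |>.2 fun i =>
    QuotientAddGroup.norm_mk_le_norm.trans (norm_le_pi_norm x i)

variable [Finite ι]

theorem mem_span_range_basisFun_iff {v : ι → ℝ} :
    v ∈ span ℤ (range (Pi.basisFun ℝ ι)) ↔ ∃ k, intVec k = v := by
  simp only [Basis.mem_span_iff_repr_mem, Pi.basisFun_repr, mem_range, Classical.skolem,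
    funext_iff, intVec, AddMonoidHom.compLeft_apply, Function.comp_apply, Int.coe_castAddHom,
    algebraMap_int_eq, eq_intCast]

theorem isDegOneLift_basisFun_iff {F : (ι → ℝ) → ι → ℝ} :
    IsDegOneLift (span ℤ (range (Pi.basisFun ℝ ι))) F ↔
      ∀ k x, F (x + intVec k) = F x + intVec k := by
  simp only [IsDegOneLift, mem_span_range_basisFun_iff, forall_exists_index,
    forall_apply_eq_imp_iff]

theorem periodic_basisFun_iff {α : Type*} {f : (ι → ℝ) → α} :
    (∀ v ∈ span ℤ (range (Pi.basisFun ℝ ι)), Function.Periodic f v) ↔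
      ∀ k x, f (x + intVec k) = f x := by
  simp only [Function.Periodic, mem_span_range_basisFun_iff, forall_exists_index,
    forall_apply_eq_imp_iff]

end TorusProj

section Surjectivity

variable {ι : Type*} {F : (ι → ℝ) → ι → ℝ}

theorem IsDegOneLift.addConstMap_comp [Finite ι]
    (hF : IsDegOneLift (span ℤ (range (Pi.basisFun ℝ ι))) F) (η : ℝ →+c[1, 1] ℝ) :
    IsDegOneLift (span ℤ (range (Pi.basisFun ℝ ι))) fun x i => η (F x i) := by
  rw [isDegOneLift_basisFun_iff] at hF ⊢
  intro k x
  ext i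
  rw [hF]
  exact AddConstMapClass.map_add_int η (F x i) (k i)

theorem det_fderiv_eq_zero_of_hasFDerivAt_zero [Finite ι] {i : ι} {x : ι → ℝ}
    (hF : DifferentiableAt ℝ F x) (hi : HasFDerivAt (fun y => F y i) (0 : (ι → ℝ) →L[ℝ] ℝ) x) :
    (fderiv ℝ F x).det = 0 := by
  classical
  have := Fintype.ofFinite ι
  have hrow : (ContinuousLinearMap.proj i : (ι → ℝ) →L[ℝ] ℝ) ∘SL fderiv ℝ F x = 0 :=
    (hasFDerivAt_pi'.1 hF.hasFDerivAt i).unique hi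
  rw [ContinuousLinearMap.det, ← LinearMap.det_toMatrix']
  exact Matrix.det_eq_zero_of_row_eq_zero i fun j => by
    simpa using DFunLike.congr_fun hrow (Pi.single j 1)

theorem IsDegOneLift.exists_det_fderiv_ne_zero [Fintype ι]
    (hF : IsDegOneLift (span ℤ (range (Pi.basisFun ℝ ι))) F) (hs : ContDiff ℝ 1 F) :
    ∃ x, (fderiv ℝ F x).det ≠ 0 := by
  by_contra! hdet
  have hint := hF.integral_det_fderiv volume hs
  simp [hdet, measureReal_def, ZSpan.fundamentalDomain_pi_basisFun, volume_pi_pi] at hint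

-- If `F x` stayed away from the lattice, composing each coordinate with a map of slope zero away
-- from `ℤ` would give a degree-one lift whose derivative is singular everywhere.
theorem IsDegOneLift.exists_norm_torusProj_lt [Fintype ι]
    (hF : IsDegOneLift (span ℤ (range (Pi.basisFun ℝ ι))) F) (hs : ContDiff ℝ 1 F)
    {δ : ℝ} (hδ : 0 < δ) : ∃ x, ‖torusProj (F x)‖ < δ := by
  by_contra! hfar
  obtain ⟨η, hη, hη0⟩ := exists_contDiff_addConstMap_hasDerivAt_zero hδ
  have hQ : ContDiff ℝ 1 fun x i => η (F x i) :=
    contDiff_pi.2 fun i => hη.comp (contDiff_pi.1 hs i)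
  obtain ⟨x, hx⟩ := (hF.addConstMap_comp η).exists_det_fderiv_ne_zero hQ
  obtain ⟨i, hi⟩ : ∃ i, δ ≤ ‖torusProj (F x) i‖ := by
    by_contra! hlt
    exact (hfar x).not_gt ((pi_norm_lt_iff hδ).2 hlt)
  refine hx (det_fderiv_eq_zero_of_hasFDerivAt_zero (i := i)
    (hQ.differentiable one_ne_zero x) ?_)
  have hFi : HasFDerivAt (fun y => F y i) _ x :=
    (differentiable_pi.1 (hs.differentiable one_ne_zero) i x).hasFDerivAt
  exact ((hη0 _ hi).comp_hasFDerivAt x hFi).congr_fderiv (zero_smul ℝ _)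

theorem IsDegOneLift.exists_torusProj_eq_zero [Finite ι]
    (hF : IsDegOneLift (span ℤ (range (Pi.basisFun ℝ ι))) F) (hc : Continuous F) :
    ∃ x, torusProj (F x) = 0 := by
  have := Fintype.ofFinite ι
  by_contra! hne
  obtain ⟨C, hC0, hC⟩ := exists_norm_le_of_periodic (b := Pi.basisFun ℝ ι)
    (f := fun x => ‖torusProj (F x)‖⁻¹)
    (periodic_basisFun_iff.2 fun k x => by
      rw [isDegOneLift_basisFun_iff.1 hF, torusProj_add_intVec])
    ((continuous_torusProj.comp hc).norm.inv₀ fun x => norm_ne_zero_iff.2 (hne x))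
  have hlower (x : ι → ℝ) : C⁻¹ ≤ ‖torusProj (F x)‖ :=
    inv_le_of_inv_le₀ (norm_pos_iff.2 (hne x)) (by simpa using hC x)
  obtain ⟨g, hg, hgper, hgF⟩ := exists_contDiff_periodic_approx (f := fun x => F x - x)
    (fun v hv => hF.periodic_sub_id hv) (hc.sub continuous_id) (half_pos (inv_pos.2 hC0))
  obtain ⟨x, hx⟩ := (IsDegOneLift.id_add_of_periodic hgper).exists_norm_torusProj_lt
    (contDiff_id.add hg) (half_pos (inv_pos.2 hC0))
  have hclose : ‖torusProj (F x) - torusProj (x + g x)‖ ≤ C⁻¹ / 2 := by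
    rw [← map_sub, ← sub_sub]
    refine (norm_torusProj_le _).trans ?_
    rw [← dist_eq_norm, dist_comm]
    exact hgF x
  have htri := norm_le_norm_add_norm_sub' (torusProj (F x)) (torusProj (x + g x))
  linarith [hlower x]

theorem IsDegOneLift.surjective [Finite ι]
    (hF : IsDegOneLift (span ℤ (range (Pi.basisFun ℝ ι))) F) (hc : Continuous F) :
    Function.Surjective F := by
  intro y
  have hFy : IsDegOneLift (span ℤ (range (Pi.basisFun ℝ ι))) fun x => F x - y := by
    intro v hv x
    simp only [hF v hv, add_sub_right_comm]
  obtain ⟨x, hx⟩ := hFy.exists_torusProj_eq_zero (hc.sub continuous_const)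
  obtain ⟨k, hk⟩ := torusProj_eq_zero_iff.1 hx
  refine ⟨x + intVec (-k), ?_⟩
  rw [isDegOneLift_basisFun_iff.1 hF, map_neg, hk]
  abel

end Surjectivity

theorem exists_torusProj_lift_of_homotopic {X ι : Type*} [TopologicalSpace X]
    {f g : C(X, ι → UnitAddCircle)} (h : f.Homotopic g) :
    ∃ φ : C(X, ι → ℝ), ∀ x, g x = f x + torusProj (φ x) := by
  obtain ⟨F⟩ := h
  let H (i : ι) : C(unitInterval × X, UnitAddCircle) := ⟨fun p => F p i - f p.2 i, by fun_prop⟩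
  have hH0 (i : ι) (x : X) : H i (0, x) = ((0 : C(X, ℝ)) x : UnitAddCircle) := by simp [H]
  have cov := AddCircle.isCoveringMap_coe (1 : ℝ)
  let Φ (i : ι) : C(unitInterval × X, ℝ) := cov.liftHomotopy (H i) 0 (hH0 i)
  have hΦ (i : ι) (x : X) : (Φ i (1, x) : UnitAddCircle) = g x i - f x i :=
    (congrFun (cov.liftHomotopy_lifts (H i) 0 (hH0 i)) (1, x)).trans (by simp [H])
  refine ⟨⟨fun x i => Φ i (1, x), by fun_prop⟩, fun x => ?_⟩
  ext i
  exact eq_add_of_sub_eq' (hΦ i x).symm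

section TorusHom

variable {m n : ℕ}

theorem torusHom_sub (A B : Matrix (Fin n) (Fin m) ℤ) (z : Torus m) :
    torusHom (A - B) z = torusHom A z - torusHom B z := by
  ext i
  simp [torusHom, sub_smul]

theorem torusHom_torusProj (A : Matrix (Fin n) (Fin m) ℤ) (x : Fin m → ℝ) :
    torusHom A (torusProj x) = torusProj (A.map ((↑) : ℤ → ℝ) *ᵥ x) := by
  ext i
  simp [torusHom, torusProj, Matrix.mulVec, dotProduct, ← zsmul_eq_mul]

theorem map_mulVec_intVec {ι κ : Type*} [Fintype κ] (A : Matrix ι κ ℤ) (k : κ → ℤ) :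
    A.map ((↑) : ℤ → ℝ) *ᵥ intVec k = intVec (A *ᵥ k) := by
  ext i
  exact ((Int.castRingHom ℝ).map_mulVec A k i).symm

theorem det_map_intCast_ne_zero {ι : Type*} [Fintype ι] [DecidableEq ι] {A : Matrix ι ι ℤ}
    (hA : A.det ≠ 0) :
    (A.map ((↑) : ℤ → ℝ)).det ≠ 0 := by
  rw [← Int.cast_det]
  exact_mod_cast hA

theorem card_quotient_range_mulVecLin {ι : Type*} [Fintype ι] [DecidableEq ι] {A : Matrix ι ι ℤ}
    (hA : A.det ≠ 0) :
    ENat.card ((ι → ℤ) ⧸ LinearMap.range A.mulVecLin) = A.det.natAbs := by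
  let e := LinearEquiv.ofInjective A.mulVecLin (Matrix.mulVec_injective_of_det_ne_zero hA)
  have hcard : A.det.natAbs = Nat.card ((ι → ℤ) ⧸ LinearMap.range A.mulVecLin) := by
    rw [← LinearMap.det_toLin' A]
    exact Submodule.natAbs_det_equiv _ e
  have : Finite ((ι → ℤ) ⧸ LinearMap.range A.mulVecLin) :=
    Nat.finite_of_card_ne_zero (hcard ▸ Int.natAbs_ne_zero.2 hA)
  rw [ENat.card_eq_coe_natCard, hcard]

end TorusHom

section NielsenClasses

variable {m n : ℕ} {A : Matrix (Fin n) (Fin m) ℤ} {φ : Torus m → Fin n → ℝ}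

/-- The zero `z` of `z ↦ torusHom A z + torusProj (φ z)` lies in the Nielsen class `q`: the map
lifts to `x ↦ A x + φ (torusProj x)` on `ℝᵐ`, and some `x` over `z` is sent to an integer vector
representing `q`. Two lifts of `z` change that vector by an element of the range of `A`. -/
def HasNielsenClass (A : Matrix (Fin n) (Fin m) ℤ) (φ : Torus m → Fin n → ℝ) (z : Torus m)
    (q : (Fin n → ℤ) ⧸ LinearMap.range A.mulVecLin) : Prop :=
  ∃ x k, torusProj x = z ∧ A.map ((↑) : ℤ → ℝ) *ᵥ x + φ z = intVec k ∧ Submodule.Quotient.mk k = q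

theorem exists_hasNielsenClass_iff {z : Torus m} :
    (∃ q, HasNielsenClass A φ z q) ↔ torusHom A z + torusProj (φ z) = 0 := by
  obtain ⟨x, rfl⟩ := torusProj_surjective z
  rw [torusHom_torusProj, ← map_add, torusProj_eq_zero_iff]
  constructor
  · rintro ⟨_, y, k, hy, hk, rfl⟩
    obtain ⟨l, rfl⟩ := torusProj_eq_iff.1 hy
    refine ⟨k - A *ᵥ l, ?_⟩
    rw [map_sub, ← hk, Matrix.mulVec_add, map_mulVec_intVec]
    abel
  · rintro ⟨k, hk⟩
    exact ⟨_, x, k, rfl, hk.symm, rfl⟩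

theorem HasNielsenClass.unique {z : Torus m} {q q' : (Fin n → ℤ) ⧸ LinearMap.range A.mulVecLin}
    (hq : HasNielsenClass A φ z q) (hq' : HasNielsenClass A φ z q') : q = q' := by
  obtain ⟨x, k, rfl, hk, rfl⟩ := hq
  obtain ⟨y, k', hy, hk', rfl⟩ := hq'
  obtain ⟨l, rfl⟩ := torusProj_eq_iff.1 hy
  have hl : A.mulVecLin l = k' - k := by
    apply intVec_injective
    rw [Matrix.mulVecLin_apply, map_sub, ← hk, ← hk', ← map_mulVec_intVec, Matrix.mulVec_add]
    abel
  exact ((Submodule.Quotient.eq _).2 (hl ▸ LinearMap.mem_range_self _ l)).symm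

theorem HasNielsenClass.eq_of_injective (hA : Function.Injective (A.map ((↑) : ℤ → ℝ)).mulVec)
    {z z' : Torus m} {q : (Fin n → ℤ) ⧸ LinearMap.range A.mulVecLin}
    (hz : HasNielsenClass A 0 z q) (hz' : HasNielsenClass A 0 z' q) : z = z' := by
  obtain ⟨x, k, rfl, hk, rfl⟩ := hz
  obtain ⟨y, k', rfl, hk', hkk'⟩ := hz'
  obtain ⟨l, hl⟩ := (Submodule.Quotient.eq _).1 hkk'.symm
  refine torusProj_eq_iff.2 ⟨l, hA ?_⟩
  simp only [Pi.zero_apply, add_zero] at hk hk'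
  rw [Matrix.mulVec_add, map_mulVec_intVec, hk, hk', ← map_add, ← Matrix.mulVecLin_apply, hl,
    add_sub_cancel]

theorem exists_hasNielsenClass {A : Matrix (Fin n) (Fin n) ℤ} (hA : A.det ≠ 0)
    {φ : Torus n → Fin n → ℝ} (hφ : Continuous φ)
    (q : (Fin n → ℤ) ⧸ LinearMap.range A.mulVecLin) : ∃ z, HasNielsenClass A φ z q := by
  obtain ⟨k, rfl⟩ := Submodule.Quotient.mk_surjective _ q
  let M := A.map ((↑) : ℤ → ℝ)
  have hM : IsUnit M.det := (det_map_intCast_ne_zero hA).isUnit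
  have hlift : IsDegOneLift (span ℤ (range (Pi.basisFun ℝ (Fin n))))
      fun x => x + M⁻¹ *ᵥ φ (torusProj x) :=
    .id_add_of_periodic <| periodic_basisFun_iff.2 fun l x => by rw [torusProj_add_intVec]
  have hcont : Continuous fun x => x + M⁻¹ *ᵥ φ (torusProj x) :=
    continuous_id.add (continuous_const.matrix_mulVec (hφ.comp continuous_torusProj))
  obtain ⟨x, hx : x + M⁻¹ *ᵥ φ (torusProj x) = _⟩ := hlift.surjective hcont (M⁻¹ *ᵥ intVec k)
  refine ⟨torusProj x, x, k, rfl, ?_, rfl⟩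
  calc M *ᵥ x + φ (torusProj x) = M *ᵥ (x + M⁻¹ *ᵥ φ (torusProj x)) := by
        rw [Matrix.mulVec_add, Matrix.mulVec_mulVec, M.mul_nonsing_inv hM, Matrix.one_mulVec]
    _ = intVec k := by rw [hx, Matrix.mulVec_mulVec, M.mul_nonsing_inv hM, Matrix.one_mulVec]

end NielsenClasses

section Coincidences

variable {n : ℕ}

theorem natAbs_det_le_card_zeros {A : Matrix (Fin n) (Fin n) ℤ} (hA : A.det ≠ 0)
    {φ : Torus n → Fin n → ℝ} (hφ : Continuous φ) :
    (A.det.natAbs : ℕ∞) ≤ ENat.card {z // torusHom A z + torusProj (φ z) = 0} := by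
  rw [← card_quotient_range_mulVecLin hA]
  choose z hz using exists_hasNielsenClass hA hφ
  refine ENat.card_le_card_of_injective
    (f := fun q => ⟨z q, exists_hasNielsenClass_iff.1 ⟨q, hz q⟩⟩) fun q q' h => ?_
  have hzz' : z q = z q' := congrArg Subtype.val h
  exact (hz q).unique (hzz' ▸ hz q')

theorem card_zeros_torusHom_le {A : Matrix (Fin n) (Fin n) ℤ} (hA : A.det ≠ 0) :
    ENat.card {z // torusHom A z = 0} ≤ A.det.natAbs := by
  rw [← card_quotient_range_mulVecLin hA]
  have hclass (z : {z // torusHom A z = 0}) : ∃ q, HasNielsenClass A 0 z q :=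
    exists_hasNielsenClass_iff.2 (by simpa using z.2)
  choose q hq using hclass
  have hinj := Matrix.mulVec_injective_of_det_ne_zero (det_map_intCast_ne_zero hA)
  exact ENat.card_le_card_of_injective (f := q) fun z z' h =>
    Subtype.ext ((hq z).eq_of_injective hinj (h ▸ hq z'))

theorem natAbs_det_sub_le_card_coincidences {A₁ A₂ : Matrix (Fin n) (Fin n) ℤ}
    (hdet : (A₁ - A₂).det ≠ 0) {f₁ f₂ : C(Torus n, Torus n)}
    (h₁ : (torusHom A₁).Homotopic f₁) (h₂ : (torusHom A₂).Homotopic f₂) :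
    ((A₁ - A₂).det.natAbs : ℕ∞) ≤ ENat.card {x // f₁ x = f₂ x} := by
  obtain ⟨φ₁, hφ₁⟩ := exists_torusProj_lift_of_homotopic h₁
  obtain ⟨φ₂, hφ₂⟩ := exists_torusProj_lift_of_homotopic h₂
  have hzero (x : Torus n) :
      torusHom (A₁ - A₂) x + torusProj ((φ₁ - φ₂) x) = 0 ↔ f₁ x = f₂ x := by
    rw [← sub_eq_zero (a := f₁ x), hφ₁, hφ₂, torusHom_sub, ContinuousMap.sub_apply, map_sub,
      add_sub_add_comm]
  simpa only [hzero] using natAbs_det_le_card_zeros hdet (φ₁ - φ₂).continuous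

theorem card_coincidences_torusHom_le {A₁ A₂ : Matrix (Fin n) (Fin n) ℤ}
    (hdet : (A₁ - A₂).det ≠ 0) :
    ENat.card {x // torusHom A₁ x = torusHom A₂ x} ≤ (A₁ - A₂).det.natAbs := by
  simpa only [torusHom_sub, sub_eq_zero] using card_zeros_torusHom_le hdet

end Coincidences

theorem stmt7 (n : ℕ) (hn : 1 ≤ n) (A₁ A₂ : Matrix (Fin n) (Fin n) ℤ)
    (hdet : (A₁ - A₂).det ≠ 0) :
    (∃ f₁' f₂' : C(Torus n, Torus n),
      (torusHom A₁).Homotopic f₁' ∧ (torusHom A₂).Homotopic f₂' ∧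
      ENat.card {x : Torus n // f₁' x = f₂' x} = ((A₁ - A₂).det.natAbs : ℕ∞)) ∧
    (∀ f₁' f₂' : C(Torus n, Torus n),
      (torusHom A₁).Homotopic f₁' → (torusHom A₂).Homotopic f₂' →
      ((A₁ - A₂).det.natAbs : ℕ∞) ≤ ENat.card {x : Torus n // f₁' x = f₂' x}) := by
  refine ⟨⟨torusHom A₁, torusHom A₂, .refl _, .refl _, le_antisymm ?_ ?_⟩, ?_⟩
  · exact card_coincidences_torusHom_le hdet
  · exact natAbs_det_sub_le_card_coincidences hdet (.refl _) (.refl _)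
  · exact fun f₁' f₂' h₁ h₂ => natAbs_det_sub_le_card_coincidences hdet h₁ h₂
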